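/- Let n, k be positive integers and let σ, τ : {1,…,n} → {0,1} be two assignments that agree on exactly z of the n variables. Then the number of ordered k-clauses on n variables that are NAE-satisfied by both σ and τ equals (2n)^k − 4·n^k + 2·z^k + 2·(n−z)^k. -/

import Mathlib

theorem aux_ie (A B C D : Prop) (d1 : ¬ (A ∧ B)) (d2 : ¬ (C ∧ D))
    [Decidable A] [Decidable B] [Decidable C] [Decidable D]
    [Decidable ((¬ B ∧ ¬ A) ∧ (¬ D ∧ ¬ C))]
    [Decidable (A ∧ C)] [Decidable (B ∧ D)] [Decidable (A ∧ D)] [Decidable (B ∧ C)] :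
    (if (¬ B ∧ ¬ A) ∧ (¬ D ∧ ¬ C) then (1:ℤ) else 0) =
      1 - (if A then (1:ℤ) else 0) - (if B then (1:ℤ) else 0) - (if C then (1:ℤ) else 0)
        - (if D then (1:ℤ) else 0) + (if A ∧ C then (1:ℤ) else 0) + (if B ∧ D then (1:ℤ) else 0)
        + (if A ∧ D then (1:ℤ) else 0) + (if B ∧ C then (1:ℤ) else 0) := by
  by_cases A <;> by_cases B <;> by_cases C <;> by_cases D <;> simp_all

theorem aux_count {L : Type} [Fintype L] (k : ℕ) (P : L → Prop) [DecidablePred P] :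
    ∑ c : Fin k → L, (if ∀ j, P (c j) then (1:ℤ) else 0) = (∑ l, if P l then (1:ℤ) else 0) ^ k := by
  rw [Fintype.sum_pow]
  refine Finset.sum_congr rfl fun c _ => ?_
  rw [Finset.prod_ite_zero]
  simp

/-- If assignments `σ, τ` on `n` variables agree on exactly `z` variables, then the
number of ordered `k`-clauses NAE-satisfied by both equals
`(2n)^k - 4 n^k + 2 z^k + 2 (n-z)^k`. -/
theorem count_doubly_nae_sat_clauses (n k z : ℕ) (hn : 0 < n) (hk : 0 < k)
    (σ τ : Fin n → Bool) (hz : Nat.card {v : Fin n // σ v = τ v} = z) :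
    (Nat.card {c : Fin k → Fin n × Bool //
        ((∃ j, σ (c j).1 = (c j).2) ∧ (∃ j, σ (c j).1 ≠ (c j).2)) ∧
        ((∃ j, τ (c j).1 = (c j).2) ∧ (∃ j, τ (c j).1 ≠ (c j).2))} : ℤ) =
      (2 * (n : ℤ)) ^ k - 4 * (n : ℤ) ^ k + 2 * (z : ℤ) ^ k + 2 * ((n : ℤ) - z) ^ k := by
  have hz1 : ∑ v, (if σ v = τ v then (1:ℤ) else 0) = z := by
    rw [← hz, Nat.card_eq_fintype_card, Fintype.card_subtype]
    simp
  have hz2 : ∑ v, (if σ v = τ v then (0:ℤ) else 1) = n - z := by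
    rw [← hz1, eq_sub_iff_add_eq, ← Finset.sum_add_distrib]
    rw [Finset.sum_congr rfl (g := fun _ => (1:ℤ)) (fun v _ => by split_ifs <;> rfl)]
    simp
  have e1 : ∀ ρ : Fin n → Bool, ∑ l : Fin n × Bool, (if ρ l.1 = l.2 then (1:ℤ) else 0) = n := by
    intro ρ
    rw [Fintype.sum_prod_type]
    simp
  have e2 : ∀ ρ : Fin n → Bool, ∑ l : Fin n × Bool, (if ρ l.1 ≠ l.2 then (1:ℤ) else 0) = n := by
    intro ρ
    rw [Fintype.sum_prod_type,
      Finset.sum_congr rfl (g := fun _ => (1:ℤ)) (fun v _ => by cases h : ρ v <;> simp [h])]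
    simp
  have f1 : ∑ l : Fin n × Bool, (if σ l.1 = l.2 ∧ τ l.1 = l.2 then (1:ℤ) else 0) = z := by
    rw [← hz1, Fintype.sum_prod_type]
    refine Finset.sum_congr rfl fun v _ => ?_
    cases h : σ v <;> cases h' : τ v <;> simp [h, h']
  have f2 : ∑ l : Fin n × Bool, (if σ l.1 ≠ l.2 ∧ τ l.1 ≠ l.2 then (1:ℤ) else 0) = z := by
    rw [← hz1, Fintype.sum_prod_type]
    refine Finset.sum_congr rfl fun v _ => ?_
    cases h : σ v <;> cases h' : τ v <;> simp [h, h']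
  have f3 : ∑ l : Fin n × Bool, (if σ l.1 = l.2 ∧ τ l.1 ≠ l.2 then (1:ℤ) else 0) = n - z := by
    rw [← hz2, Fintype.sum_prod_type]
    refine Finset.sum_congr rfl fun v _ => ?_
    cases h : σ v <;> cases h' : τ v <;> simp [h, h']
  have f4 : ∑ l : Fin n × Bool, (if σ l.1 ≠ l.2 ∧ τ l.1 = l.2 then (1:ℤ) else 0) = n - z := by
    rw [← hz2, Fintype.sum_prod_type]
    refine Finset.sum_congr rfl fun v _ => ?_
    cases h : σ v <;> cases h' : τ v <;> simp [h, h']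
  have tot : ∑ c : Fin k → Fin n × Bool, (1:ℤ) = (2 * (n:ℤ)) ^ k := by
    simp [mul_comm]
  have key : ∀ c : Fin k → Fin n × Bool,
      (if ((∃ j, σ (c j).1 = (c j).2) ∧ (∃ j, σ (c j).1 ≠ (c j).2)) ∧
        ((∃ j, τ (c j).1 = (c j).2) ∧ (∃ j, τ (c j).1 ≠ (c j).2)) then (1:ℤ) else 0) =
      1 - (if ∀ j, σ (c j).1 = (c j).2 then (1:ℤ) else 0)
        - (if ∀ j, σ (c j).1 ≠ (c j).2 then (1:ℤ) else 0)
        - (if ∀ j, τ (c j).1 = (c j).2 then (1:ℤ) else 0)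
        - (if ∀ j, τ (c j).1 ≠ (c j).2 then (1:ℤ) else 0)
        + (if ∀ j, (σ (c j).1 = (c j).2 ∧ τ (c j).1 = (c j).2) then (1:ℤ) else 0)
        + (if ∀ j, (σ (c j).1 ≠ (c j).2 ∧ τ (c j).1 ≠ (c j).2) then (1:ℤ) else 0)
        + (if ∀ j, (σ (c j).1 = (c j).2 ∧ τ (c j).1 ≠ (c j).2) then (1:ℤ) else 0)
        + (if ∀ j, (σ (c j).1 ≠ (c j).2 ∧ τ (c j).1 = (c j).2) then (1:ℤ) else 0) := by
    intro c
    have d : ∀ ρ : Fin n → Bool,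
        ¬ ((∀ j, ρ (c j).1 = (c j).2) ∧ (∀ j, ρ (c j).1 ≠ (c j).2)) :=
      fun ρ h => h.2 ⟨0, hk⟩ (h.1 ⟨0, hk⟩)
    have n1 : ∀ ρ : Fin n → Bool, (∃ j, ρ (c j).1 = (c j).2) ↔ ¬ ∀ j, ρ (c j).1 ≠ (c j).2 := by
      intro ρ; simp
    have n2 : ∀ ρ : Fin n → Bool, (∃ j, ρ (c j).1 ≠ (c j).2) ↔ ¬ ∀ j, ρ (c j).1 = (c j).2 := by
      intro ρ; simp
    have d1 := d σ
    have d2 := d τ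
    simp only [n1, n2, forall_and]
    exact aux_ie _ _ _ _ d1 d2
  rw [Nat.card_eq_fintype_card, Fintype.card_subtype, Finset.card_filter]
  push_cast
  rw [Finset.sum_congr rfl fun c _ => key c]
  simp only [Finset.sum_add_distrib, Finset.sum_sub_distrib]
  rw [tot, aux_count k (fun l : Fin n × Bool => σ l.1 = l.2),
    aux_count k (fun l : Fin n × Bool => σ l.1 ≠ l.2),
    aux_count k (fun l : Fin n × Bool => τ l.1 = l.2),
    aux_count k (fun l : Fin n × Bool => τ l.1 ≠ l.2),
    aux_count k (fun l : Fin n × Bool => σ l.1 = l.2 ∧ τ l.1 = l.2),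
    aux_count k (fun l : Fin n × Bool => σ l.1 ≠ l.2 ∧ τ l.1 ≠ l.2),
    aux_count k (fun l : Fin n × Bool => σ l.1 = l.2 ∧ τ l.1 ≠ l.2),
    aux_count k (fun l : Fin n × Bool => σ l.1 ≠ l.2 ∧ τ l.1 = l.2),
    e1, e2, e1, e2, f1, f2, f3, f4]
  ring
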